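/- For every integer n ≥ 1 and reals p ∈ (0, 1/2) and ε > 0 satisfying 4·e^ε·p < 1/2, one has d_ε(1+Bin(n,p) ‖ Bin(n,p)) ≥ (1/(2·√(2n))) · exp(−4·n·e^ε·p·ln(4·e^ε)). -/

import Mathlib

/-- Hockey-stick divergence on distributions over ℕ. -/
noncomputable def hsDiv (ε : ℝ) (P Q : ℕ → ℝ) : ℝ :=
  ∑' k, max (P k - Real.exp ε * Q k) 0

/-- The binomial distribution `Bin(n,p)` as a pmf on ℕ. -/
noncomputable def binom (n : ℕ) (p : ℝ) : ℕ → ℝ :=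
  fun k => (n.choose k : ℝ) * p ^ k * (1 - p) ^ (n - k)

/-- The distribution `1+X`: `X` shifted up by one. -/
noncomputable def shift1 (X : ℕ → ℝ) : ℕ → ℝ :=
  fun k => if k = 0 then 0 else X (k - 1)

/-!
The single point `m + 1` contributes `Bin(n,p)(m) - e^ε * Bin(n,p)(m + 1)` to the divergence. Write
`a = e^ε` and take `m = ⌊4anp⌋`, capped at `n`. So far above the mean `np`, consecutive binomial
probabilities drop by a factor of at least `2a`, so this contribution is at least half of
`Bin(n,p)(m)`. If `m = 0`, then `Bin(n,p)(m) ≥ 1 - np ≥ 3/4`. Otherwise `m ≥ np`, and `Bin(n,p)(m)`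
is at least `exp(-n * KL(m/n ‖ p)) / √(2n) ≥ (np/m) ^ m / √(2n) ≥ (4a) ^ (-m) / √(2n)`.

The factor `√(2n)` comes from the sharp estimate `n ^ n ≤ √(2n) * C(n,k) * k ^ k * (n-k) ^ (n-k)`.
It follows by AM-GM from `s j * s k ≤ 2 * s (j + k)` for the Stirling sequence
`s n = n! / (√(2n) * (n/e) ^ n)`, which holds because `log s` is convex and there is equality for
`j = k = 1`.
-/

open Real Stirling

section Stirling

lemma log_stirlingSeq_sub_antitone :
    Antitone fun n ↦ log (stirlingSeq (n + 1)) - log (stirlingSeq (n + 2)) := by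
  intro m n hmn
  refine hasSum_le (fun k ↦ ?_) (log_stirlingSeq_sdiff_hasSum n) (log_stirlingSeq_sdiff_hasSum m)
  gcongr

lemma stirlingSeq_pos {n : ℕ} (hn : n ≠ 0) : 0 < stirlingSeq n := by
  obtain ⟨k, rfl⟩ := Nat.exists_eq_succ_of_ne_zero hn
  exact stirlingSeq'_pos k

lemma factorial_eq_stirlingSeq_mul {n : ℕ} (hn : n ≠ 0) :
    (n.factorial : ℝ) = stirlingSeq n * (√(2 * n) * (n / exp 1) ^ n) := by
  rw [stirlingSeq, div_mul_cancel₀ _ (by positivity)]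

lemma stirlingSeq_one_sq : stirlingSeq 1 ^ 2 = 2 * stirlingSeq 2 := by
  have sqrt_four : √(2 * 2) = (2 : ℝ) := sqrt_mul_self zero_le_two
  rw [stirlingSeq_one, stirlingSeq, div_pow, sq_sqrt zero_le_two]
  push_cast [Nat.factorial_two, sqrt_four]
  field_simp

lemma log_stirlingSeq_add_log_stirlingSeq_le (j k : ℕ) :
    log (stirlingSeq (j + 1)) + log (stirlingSeq (k + 1)) ≤
      log 2 + log (stirlingSeq (j + k + 2)) := by
  induction k with
  | zero =>
    have first_drop : log (stirlingSeq (j + 1)) - log (stirlingSeq (j + 2)) ≤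
        log (stirlingSeq 1) - log (stirlingSeq 2) := log_stirlingSeq_sub_antitone j.zero_le
    have equality_case : 2 * log (stirlingSeq 1) = log 2 + log (stirlingSeq 2) := by
      rw [← log_mul two_ne_zero (stirlingSeq_pos two_ne_zero).ne', ← stirlingSeq_one_sq, log_pow,
        Nat.cast_two]
    simp only [zero_add, add_zero]
    linarith
  | succ k ih =>
    have drop_le : log (stirlingSeq (j + k + 2)) - log (stirlingSeq (j + k + 3)) ≤
        log (stirlingSeq (k + 1)) - log (stirlingSeq (k + 2)) :=
      log_stirlingSeq_sub_antitone (show k ≤ j + k + 1 by lia)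
    rw [show j + (k + 1) + 2 = j + k + 3 by ring, show k + 1 + 1 = k + 2 from rfl]
    linarith

lemma stirlingSeq_mul_stirlingSeq_le {j k : ℕ} (hj : j ≠ 0) (hk : k ≠ 0) :
    stirlingSeq j * stirlingSeq k ≤ 2 * stirlingSeq (j + k) := by
  have hj_pos := stirlingSeq_pos hj
  have hk_pos := stirlingSeq_pos hk
  have hjk_pos : 0 < stirlingSeq (j + k) := stirlingSeq_pos (by lia)
  rw [← log_le_log_iff (by positivity) (by positivity), log_mul hj_pos.ne' hk_pos.ne',
    log_mul two_ne_zero hjk_pos.ne']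
  obtain ⟨j, rfl⟩ := Nat.exists_eq_succ_of_ne_zero hj
  obtain ⟨k, rfl⟩ := Nat.exists_eq_succ_of_ne_zero hk
  rw [show j.succ + k.succ = j + k + 2 by lia]
  exact log_stirlingSeq_add_log_stirlingSeq_le j k

lemma stirlingSeq_mul_sqrt_mul_add_pow_add {j k : ℕ} (hj : j ≠ 0) (hk : k ≠ 0) :
    stirlingSeq (j + k) * √(2 * (j + k : ℕ)) * ((j + k : ℕ) : ℝ) ^ (j + k) =
      (j + k).choose k * (j : ℝ) ^ j * (k : ℝ) ^ k *
        (stirlingSeq j * stirlingSeq k) * (√(2 * j) * √(2 * k)) := by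
  have factorial_eq : ((j + k).choose k : ℝ) * j.factorial * k.factorial = (j + k).factorial := by
    exact_mod_cast Nat.add_choose_mul_factorial_mul_factorial j k
  rw [factorial_eq_stirlingSeq_mul hj, factorial_eq_stirlingSeq_mul hk,
    factorial_eq_stirlingSeq_mul (show j + k ≠ 0 by lia)] at factorial_eq
  simp only [div_pow, pow_add (exp 1)] at factorial_eq
  field_simp at factorial_eq
  linarith

lemma sqrt_two_mul_mul_sqrt_two_mul_le {x y : ℝ} (hx : 0 ≤ x) (hy : 0 ≤ y) :
    √(2 * x) * √(2 * y) ≤ x + y := by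
  have := two_mul_le_add_sq √(2 * x) √(2 * y)
  rw [sq_sqrt (by positivity), sq_sqrt (by positivity)] at this
  linarith

lemma add_pow_add_le_sqrt_mul_add_choose {j k : ℕ} (hjk : j + k ≠ 0) :
    ((j + k : ℕ) : ℝ) ^ (j + k) ≤
      √(2 * (j + k : ℕ)) * ((j + k).choose k * (j : ℝ) ^ j * (k : ℝ) ^ k) := by
  have one_le_sqrt : 1 ≤ √(2 * (j + k : ℕ) : ℝ) := by
    have : (1 : ℝ) ≤ (j + k : ℕ) := by exact_mod_cast Nat.one_le_iff_ne_zero.2 hjk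
    exact one_le_sqrt.2 (by linarith)
  rcases eq_or_ne j 0 with rfl | hj
  · simpa using le_mul_of_one_le_left (by positivity) one_le_sqrt
  rcases eq_or_ne k 0 with rfl | hk
  · simpa using le_mul_of_one_le_left (by positivity) one_le_sqrt
  have sqrt_mul_sqrt_le : √(2 * j) * √(2 * k) ≤ ((j + k : ℕ) : ℝ) := by
    simpa using sqrt_two_mul_mul_sqrt_two_mul_le j.cast_nonneg k.cast_nonneg
  have stirling_mul_le := stirlingSeq_mul_stirlingSeq_le hj hk
  have stirling_eq := stirlingSeq_mul_sqrt_mul_add_pow_add hj hk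
  have stirling_pos := stirlingSeq_pos hjk
  set n := j + k
  set C : ℝ := n.choose k * (j : ℝ) ^ j * (k : ℝ) ^ k
  refine le_of_mul_le_mul_left ?_ (show 0 < stirlingSeq n * √(2 * n) by positivity)
  calc stirlingSeq n * √(2 * n) * (n : ℝ) ^ n
      = C * (stirlingSeq j * stirlingSeq k) * (√(2 * j) * √(2 * k)) := stirling_eq
    _ ≤ C * (2 * stirlingSeq n) * n :=
        mul_le_mul (mul_le_mul_of_nonneg_left stirling_mul_le (by positivity)) sqrt_mul_sqrt_le
          (by positivity) (by positivity)
    _ = C * stirlingSeq n * (√(2 * n) * √(2 * n)) := by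
        rw [mul_self_sqrt (by positivity)]
        ring
    _ = stirlingSeq n * √(2 * n) * (√(2 * n) * C) := by ring

end Stirling

section Binomial

variable {n : ℕ} {p : ℝ}

lemma summable_binom (n : ℕ) (p : ℝ) : Summable (binom n p) := by
  refine summable_of_ne_finset_zero (s := Finset.range (n + 1)) fun k hk ↦ ?_
  have hnk : n < k := by simpa using hk
  simp [binom, Nat.choose_eq_zero_of_lt hnk]

lemma succ_mul_binom_succ (n m : ℕ) (p : ℝ) :
    (m + 1) * (1 - p) * binom n p (m + 1) = (n - m) * p * binom n p m := by
  rcases lt_or_ge m n with hmn | hnm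
  · have choose_succ : (n.choose (m + 1) : ℝ) * (m + 1) = n.choose m * (n - m) := by
      rw [← Nat.cast_sub hmn.le]
      exact_mod_cast Nat.choose_succ_right_eq n m
    have sub_eq : n - m = n - (m + 1) + 1 := by lia
    simp only [binom, sub_eq, pow_succ]
    linear_combination p ^ m * p * (1 - p) ^ (n - (m + 1)) * (1 - p) * choose_succ
  · rcases hnm.eq_or_lt with rfl | hnm
    · simp [binom]
    · have hnm' : n < m + 1 := hnm.trans m.lt_succ_self
      simp [binom, Nat.choose_eq_zero_of_lt hnm, Nat.choose_eq_zero_of_lt hnm']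

lemma binom_nonneg (hp0 : 0 ≤ p) (hp1 : p ≤ 1) (m : ℕ) : 0 ≤ binom n p m := by
  have : 0 ≤ 1 - p := sub_nonneg.2 hp1
  unfold binom
  positivity

lemma mul_binom_succ_le_binom {c : ℝ} {m : ℕ} (hc : 0 ≤ c) (hp0 : 0 ≤ p) (hp1 : p < 1)
    (h : c * (n * p) ≤ (m + 1) * (1 - p)) : c * binom n p (m + 1) ≤ binom n p m := by
  have hq : 0 < (m + 1) * (1 - p) := mul_pos m.cast_add_one_pos (sub_pos.2 hp1)
  have hb : 0 ≤ binom n p m := binom_nonneg hp0 hp1.le m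
  refine le_of_mul_le_mul_left ?_ hq
  calc (m + 1) * (1 - p) * (c * binom n p (m + 1))
      = c * ((n - m) * p) * binom n p m := by
        linear_combination c * succ_mul_binom_succ n m p
    _ ≤ c * (n * p) * binom n p m := by
        gcongr
        exact sub_le_self _ m.cast_nonneg
    _ ≤ (m + 1) * (1 - p) * binom n p m := by gcongr

lemma pow_le_sqrt_mul_binom {x : ℝ} {m : ℕ} (hn : n ≠ 0) (hmn : m ≤ n) (hx : 0 ≤ x)
    (hxm : x * m ≤ n * p) (hm : n * p ≤ m) : x ^ m ≤ √(2 * n) * binom n p m := by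
  have hn0 : (0 : ℝ) < n := by positivity
  have hp0 : 0 ≤ p := nonneg_of_mul_nonneg_right ((by positivity : 0 ≤ x * m).trans hxm) hn0
  have hp1 : p ≤ 1 := (mul_le_iff_le_one_right hn0).1 (hm.trans (by exact_mod_cast hmn))
  have : 0 ≤ 1 - p := sub_nonneg.2 hp1
  obtain ⟨l, rfl⟩ := Nat.exists_eq_add_of_le' hmn
  have hl : (l : ℝ) ≤ (l + m : ℕ) * (1 - p) := by
    push_cast at hm ⊢
    linarith
  have self_pow_pos : 0 < (m : ℝ) ^ m * (l : ℝ) ^ l := by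
    exact_mod_cast Nat.mul_pos Nat.pow_self_pos Nat.pow_self_pos
  refine le_of_mul_le_mul_right ?_ self_pow_pos
  calc x ^ m * ((m : ℝ) ^ m * (l : ℝ) ^ l)
      = (x * m) ^ m * (l : ℝ) ^ l := by ring
    _ ≤ ((l + m : ℕ) * p) ^ m * ((l + m : ℕ) * (1 - p)) ^ l := by gcongr
    _ = ((l + m : ℕ) : ℝ) ^ (l + m) * (p ^ m * (1 - p) ^ l) := by
        rw [mul_pow, mul_pow, pow_add]
        ring
    _ ≤ √(2 * (l + m : ℕ)) * ((l + m).choose m * (l : ℝ) ^ l * (m : ℝ) ^ m) *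
          (p ^ m * (1 - p) ^ l) := by
        gcongr
        exact add_pow_add_le_sqrt_mul_add_choose hn
    _ = √(2 * (l + m : ℕ)) * binom (l + m) p m * ((m : ℝ) ^ m * (l : ℝ) ^ l) := by
        rw [binom, Nat.add_sub_cancel_right]
        ring

lemma one_le_sqrt_mul_binom_zero (hn : n ≠ 0) (h : 4 * (n * p) ≤ 1) :
    1 ≤ √(2 * n) * binom n p 0 := by
  have hn1 : (1 : ℝ) ≤ n := by exact_mod_cast Nat.one_le_iff_ne_zero.2 hn
  have bernoulli : 3 / 4 ≤ binom n p 0 := by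
    have := one_add_mul_le_pow (a := -p) (by nlinarith) n
    rw [← sub_eq_add_neg 1 p] at this
    simp only [binom, Nat.choose_zero_right, Nat.cast_one, pow_zero, Nat.sub_zero, one_mul]
    linarith
  have four_thirds_le : 4 / 3 ≤ √(2 * n : ℝ) := le_sqrt_of_sq_le (by linarith)
  calc (1 : ℝ) = 4 / 3 * (3 / 4) := by norm_num
    _ ≤ √(2 * n) * binom n p 0 := by gcongr

lemma exists_two_mul_binom_succ_le_and_inv_pow_le {a : ℝ} (hn : n ≠ 0) (hp0 : 0 ≤ p) (hp1 : p ≤ 1)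
    (ha : 1 ≤ a) :
    ∃ m : ℕ, m ≤ 4 * n * a * p ∧ 2 * a * binom n p (m + 1) ≤ binom n p m ∧
      (4 * a)⁻¹ ^ m ≤ √(2 * n) * binom n p m := by
  have : (1 : ℝ) ≤ n := by exact_mod_cast Nat.one_le_iff_ne_zero.2 hn
  have hnp : 0 ≤ n * p := by positivity
  have hnp_le : n * p ≤ a * (n * p) := le_mul_of_one_le_left hnp ha
  rcases le_or_gt 1 (4 * a * p) with hap | hap
  · have hle : (n : ℝ) ≤ 4 * n * a * p := by nlinarith
    refine ⟨n, hle, ?_, ?_⟩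
    · simpa [binom] using pow_nonneg hp0 n
    · refine pow_le_sqrt_mul_binom hn le_rfl (by positivity) ?_ ?_
      · rw [inv_mul_le_iff₀ (by positivity)]
        linarith
      · exact mul_le_of_le_one_right n.cast_nonneg hp1
  · set m := ⌊4 * n * a * p⌋₊
    have hm_le : (m : ℝ) ≤ 4 * n * a * p := Nat.floor_le (by positivity)
    have hlt_m : 4 * n * a * p < m + 1 := Nat.lt_floor_add_one _
    have hmn : m ≤ n := Nat.floor_le_of_le (by nlinarith)
    have hp_lt : p < 1 / 4 := by linarith [le_mul_of_one_le_left hp0 ha]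
    refine ⟨m, hm_le, ?_, ?_⟩
    · refine mul_binom_succ_le_binom (by positivity) hp0 (by linarith) ?_
      calc 2 * a * (n * p) ≤ (m + 1) * (1 / 2) := by linarith
        _ ≤ (m + 1) * (1 - p) := by
            gcongr
            linarith
    · rcases Nat.eq_zero_or_pos m with hm0 | hm0
      · rw [hm0, Nat.cast_zero] at hlt_m
        rw [hm0, pow_zero]
        exact one_le_sqrt_mul_binom_zero hn (by linarith)
      · have hm1 : (1 : ℝ) ≤ m := by exact_mod_cast hm0
        refine pow_le_sqrt_mul_binom hn hmn (by positivity) ?_ (by linarith)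
        rw [inv_mul_le_iff₀ (by positivity)]
        linarith

end Binomial

section HockeyStick

lemma summable_shift1 {X : ℕ → ℝ} (hX : Summable X) : Summable (shift1 X) :=
  (summable_nat_add_iff 1).1 hX

lemma sub_exp_mul_le_hsDiv {P Q : ℕ → ℝ} (hP : Summable P) (hQ : Summable Q) (ε : ℝ) (k : ℕ) :
    P k - exp ε * Q k ≤ hsDiv ε P Q := by
  have summable_terms : Summable fun k ↦ max (P k - exp ε * Q k) 0 :=
    (hP.sub (hQ.mul_left _)).abs.of_nonneg_of_le (fun _ ↦ le_max_right _ _)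
      fun _ ↦ max_le (le_abs_self _) (abs_nonneg _)
  exact (le_max_left _ 0).trans (summable_terms.le_tsum k fun _ _ ↦ le_max_right _ _)

end HockeyStick

lemma exp_neg_mul_log_le_inv_pow {x t : ℝ} {m : ℕ} (hx : 1 ≤ x) (hmt : m ≤ t) :
    exp (-(t * log x)) ≤ x⁻¹ ^ m := by
  have hx0 : 0 < x := by linarith
  calc exp (-(t * log x)) ≤ exp (-(m * log x)) := by
        have := log_nonneg hx
        gcongr
    _ = x⁻¹ ^ m := by rw [exp_neg, exp_nat_mul, exp_log hx0, inv_pow]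

theorem stmt_19_general (n : ℕ) (hn : 1 ≤ n) (p ε : ℝ) (hp0 : 0 ≤ p) (hp1 : p ≤ 1)
    (hε : 0 ≤ ε) :
    (1 / (2 * √(2 * (n : ℝ)))) * exp (-(4 * (n : ℝ) * exp ε * p * log (4 * exp ε)))
      ≤ hsDiv ε (shift1 (binom n p)) (binom n p) := by
  have ha : 1 ≤ exp ε := one_le_exp hε
  obtain ⟨m, hm, hdrop, hmass⟩ :=
    exists_two_mul_binom_succ_le_and_inv_pow_le (Nat.one_le_iff_ne_zero.1 hn) hp0 hp1 ha
  have : (0 : ℝ) < n := by exact_mod_cast hn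
  calc (1 / (2 * √(2 * (n : ℝ)))) * exp (-(4 * (n : ℝ) * exp ε * p * log (4 * exp ε)))
      ≤ (1 / (2 * √(2 * n))) * (√(2 * n) * binom n p m) := by
        gcongr
        exact (exp_neg_mul_log_le_inv_pow (by linarith) hm).trans hmass
    _ = binom n p m / 2 := by field_simp
    _ ≤ binom n p m - exp ε * binom n p (m + 1) := by linarith
    _ ≤ hsDiv ε (shift1 (binom n p)) (binom n p) :=
        sub_exp_mul_le_hsDiv (summable_shift1 (summable_binom n p)) (summable_binom n p) ε (m + 1)

/-- lower bound on `d_ε(1+Bin(n,p) ‖ Bin(n,p))`. -/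
theorem stmt_19 (n : ℕ) (hn : 1 ≤ n) (p ε : ℝ) (hp0 : 0 < p) (hp1 : p < 1 / 2)
    (hε : 0 < ε) (h : 4 * Real.exp ε * p < 1 / 2) :
    (1 / (2 * Real.sqrt (2 * (n : ℝ)))) *
        Real.exp (-(4 * (n : ℝ) * Real.exp ε * p * Real.log (4 * Real.exp ε)))
      ≤ hsDiv ε (shift1 (binom n p)) (binom n p) :=
  stmt_19_general n hn p ε hp0.le (by linarith) hε.le
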